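/- Let n ≥ 1, 1 < p < ∞, 1 ≤ q ≤ ∞, 0 ≤ α < n(p-1), let M ∈ ℕ and let s be a real number with 0 < s < M. Then there exists a constant c > 0 such that for every real λ with 1 ≤ λ < ∞ and every f ∈ B^s_{p,q}(ℝ^n, |·|^α) (defined via the ball-means-of-differences norm of order M), the dilated function x ↦ f(λx) belongs to B^s_{p,q}(ℝ^n, |·|^α) and ‖f(λ·)‖* ≤ c λ^{s − (n+α)/p} ‖f‖*. -/

import Mathlib

/-!
Dilation turns the ball means of `f(λ·)` at scale `t` into those of `f` at scale `λ t`, composed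
with the dilation (`ballMeans_dilation`), and a dilation multiplies the norm of `L^p(|·|^α)` by
`λ^(-(n+α)/p)` (`wLpE_dilation`). After substituting `u = λ t`, the seminorm of `f(λ·)` is therefore
`λ^(s-(n+α)/p)` times the seminorm of `f` with `u` running over `(0, λ)` instead of `(0, 1)`. The
range `u < 1` is the original seminorm; on `u ≥ 1` the factor `u^(-s)` decays, so it is enough that
the ball means are bounded on `L^p(|·|^α)` uniformly in the scale (`exists_ballMeans_bound`).

That uniform bound plays the role of the weighted maximal inequality but only needs averages at a
single scale. Put `β = α/(p-1) < n`. Hölder's inequality gives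
`(∫_{|h|≤1} g(x+rh) dh)^p ≤ (∫_{|h|≤1} g(x+rh)^p |x+rh|^α dh) (∫_{|h|≤1} |x+rh|^(-β) dh)^(p-1)`,
and `|x|^β ∫_{|h|≤1} |x+rh|^(-β) dh` is bounded uniformly in `x` and `r` (`exists_A1_bound`): by
scaling `r = 1`, and then `|x| ≤ |x+h| + 1` reduces it to the integrability of `|y|^(-β)` on the
unit ball. Multiplying by `|x|^α`, integrating in `x` and using Tonelli finishes the argument
(`exists_ballAverage_bound`).
-/

open MeasureTheory ENNReal Filter

noncomputable section

/-- Weighted `L^p` "norm" with power weight `|x|^α`, for `ℝ≥0∞`-valued functions. -/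
noncomputable def wLpE (n : ℕ) (p α : ℝ) (F : EuclideanSpace ℝ (Fin n) → ℝ≥0∞) : ℝ≥0∞ :=
  (∫⁻ x, F x ^ p * (‖x‖₊ : ℝ≥0∞) ^ α) ^ (1 / p)

/-- Weighted `L^p` norm `(∫ |f(x)|^p |x|^α dx)^(1/p)`. -/
noncomputable def wLp (n : ℕ) (p α : ℝ) (f : EuclideanSpace ℝ (Fin n) → ℝ) : ℝ≥0∞ :=
  wLpE n p α (fun x => (‖f x‖₊ : ℝ≥0∞))

/-- Iterated difference `Δ_h^M f (x) = ∑_{i=0}^M (-1)^(M-i) C(M,i) f (x + i h)`. -/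
def iterDiff (n M : ℕ) (f : EuclideanSpace ℝ (Fin n) → ℝ) (h x : EuclideanSpace ℝ (Fin n)) : ℝ :=
  ∑ i ∈ Finset.range (M + 1), (-1 : ℝ) ^ (M - i) * (M.choose i : ℝ) * f (x + (i : ℝ) • h)

/-- Ball means of differences `d_t^M f (x) = ∫_{|h| ≤ 1} |Δ_{t h}^M f (x)| dh`. -/
noncomputable def ballMeans (n M : ℕ) (f : EuclideanSpace ℝ (Fin n) → ℝ) (t : ℝ)
    (x : EuclideanSpace ℝ (Fin n)) : ℝ≥0∞ :=
  ∫⁻ h in {h : EuclideanSpace ℝ (Fin n) | ‖h‖ ≤ 1}, (‖iterDiff n M f (t • h) x‖₊ : ℝ≥0∞)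

/-- The weighted Besov norm defined via ball means of differences of order `M`. -/
noncomputable def besovNorm (n : ℕ) (p α s : ℝ) (q : ℝ≥0∞) (M : ℕ)
    (f : EuclideanSpace ℝ (Fin n) → ℝ) : ℝ≥0∞ :=
  wLp n p α f +
    if q = ∞ then
      ⨆ t ∈ Set.Ioo (0 : ℝ) 1, ENNReal.ofReal (t ^ (-s)) * wLpE n p α (ballMeans n M f t)
    else
      (∫⁻ t in Set.Ioo (0 : ℝ) 1,
          ENNReal.ofReal (t ^ (-(s * q.toReal))) * wLpE n p α (ballMeans n M f t) ^ q.toReal *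
            ENNReal.ofReal t⁻¹) ^ (1 / q.toReal)

/-- Membership in the weighted Besov space `B^s_{p,q}(ℝ^n, |·|^α)`. -/
def MemBesov (n : ℕ) (p α s : ℝ) (q : ℝ≥0∞) (M : ℕ)
    (f : EuclideanSpace ℝ (Fin n) → ℝ) : Prop :=
  Measurable f ∧ besovNorm n p α s q M f < ∞

/-! ### Power weights and averages over balls -/

/-- Power weights of exponent `-β` with `β < n` are integrable on the unit ball of `ℝ^n`. -/
lemma lintegral_unitBall_norm_rpow_lt_top {n : ℕ} (hn : 1 ≤ n) {β : ℝ} (hβ : β < n) :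
    ∫⁻ h in {h : EuclideanSpace ℝ (Fin n) | ‖h‖ ≤ 1}, (‖h‖₊ : ℝ≥0∞) ^ (-β) < ∞ := by
  have : Nonempty (Fin n) := ⟨⟨0, hn⟩⟩
  have hloc : LocallyIntegrable (fun x : EuclideanSpace ℝ (Fin n) => ‖x‖ ^ (-β)) volume := by
    refine locallyIntegrable_of_norm_le_rpow (C := 1) (α := β) (by simpa using hn)
      (by simpa using hβ) (Eventually.of_forall fun x => ?_) ?_
    · rw [one_mul, Real.norm_of_nonneg (by positivity)]
    · exact (measurable_norm.pow_const _).aestronglyMeasurable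
  have hset : {h : EuclideanSpace ℝ (Fin n) | ‖h‖ ≤ 1} = Metric.closedBall 0 1 := by
    ext; simp
  have hint := (hloc.integrableOn_isCompact (isCompact_closedBall 0 1)).2
  rw [hset]
  refine lt_of_le_of_lt (lintegral_mono_ae ?_) hint
  filter_upwards [ae_restrict_of_ae
    (Measure.ae_ne volume (0 : EuclideanSpace ℝ (Fin n)))] with x hx
  rw [Real.enorm_eq_ofReal (by positivity),
    ← ENNReal.ofReal_rpow_of_pos (norm_pos_iff.2 hx), ofReal_norm, enorm_eq_nnnorm]

lemma volume_unitBall_lt_top (n : ℕ) :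
    volume {h : EuclideanSpace ℝ (Fin n) | ‖h‖ ≤ 1} < ∞ := by
  have hset : {h : EuclideanSpace ℝ (Fin n) | ‖h‖ ≤ 1} = Metric.closedBall 0 1 := by
    ext; simp
  rw [hset]
  exact measure_closedBall_lt_top

lemma measurableSet_unitBall (n : ℕ) :
    MeasurableSet {h : EuclideanSpace ℝ (Fin n) | ‖h‖ ≤ 1} :=
  measurableSet_le measurable_norm measurable_const

/-- This holds at `a = 0` and `a = ∞` too, thanks to `0 * ∞ = 0`. -/
lemma rpow_mul_rpow_neg_le_one (a : ℝ≥0∞) (β : ℝ) : a ^ β * a ^ (-β) ≤ 1 := by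
  rw [ENNReal.rpow_neg]
  exact ENNReal.mul_inv_le_one _

lemma add_one_rpow_le (a : ℝ≥0∞) {β : ℝ} (hβ : 0 ≤ β) :
    (a + 1) ^ β ≤ 2 ^ β * (a ^ β + 1) := by
  have h : a + 1 ≤ 2 * max a 1 := by
    rw [two_mul]; exact add_le_add (le_max_left _ _) (le_max_right _ _)
  refine (ENNReal.rpow_le_rpow h hβ).trans ?_
  rw [ENNReal.mul_rpow_of_nonneg _ _ hβ]
  gcongr
  rcases le_total a 1 with h1 | h1
  · rw [max_eq_right h1, ENNReal.one_rpow]; exact le_add_self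
  · rw [max_eq_left h1]; exact le_self_add

/-- The power weight `|x|^(-β)`, `0 ≤ β < n`, satisfies a Muckenhoupt `A_1`-type condition on balls
centred at `x`, uniformly in the radius `r`. -/
lemma exists_A1_bound {n : ℕ} (hn : 1 ≤ n) {β : ℝ} (hβ0 : 0 ≤ β) (hβ : β < n) :
    ∃ C : ℝ≥0∞, C < ∞ ∧ ∀ r : ℝ, 0 ≤ r → ∀ x : EuclideanSpace ℝ (Fin n),
      (‖x‖₊ : ℝ≥0∞) ^ β * ∫⁻ h in {h : EuclideanSpace ℝ (Fin n) | ‖h‖ ≤ 1},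
        (‖x + r • h‖₊ : ℝ≥0∞) ^ (-β) ≤ C := by
  set B := {h : EuclideanSpace ℝ (Fin n) | ‖h‖ ≤ 1} with hB
  have hBm : MeasurableSet B := measurableSet_unitBall n
  set V := volume B with hV
  have hVt : V < ∞ := volume_unitBall_lt_top n
  set I := ∫⁻ h in B, (‖h‖₊ : ℝ≥0∞) ^ (-β) with hI
  have hIt : I < ∞ := lintegral_unitBall_norm_rpow_lt_top hn hβ
  have h2 : (1 : ℝ≥0∞) ≤ 2 ^ β := by
    simpa using ENNReal.rpow_le_rpow (one_le_two (α := ℝ≥0∞)) hβ0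
  have h2t : (2 : ℝ≥0∞) ^ β < ∞ := ENNReal.rpow_lt_top_of_nonneg hβ0 (by simp)
  refine ⟨2 ^ β * (V + (V + I)), ?_, fun r hr x => ?_⟩
  · exact ENNReal.mul_lt_top h2t (by simp [hVt, hIt])
  rcases hr.eq_or_lt with rfl | hr
  · simp only [zero_smul, add_zero, setLIntegral_const, ← mul_assoc]
    calc _ ≤ 1 * V := by gcongr; exact rpow_mul_rpow_neg_le_one _ _
      _ ≤ 2 ^ β * (V + (V + I)) := by gcongr; exact le_self_add
  -- Homogeneity reduces the claim to `r = 1` with `x` replaced by `u = x / r`.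
  obtain ⟨u, rfl⟩ : ∃ u, x = r • u := ⟨r⁻¹ • x, by rw [smul_inv_smul₀ hr.ne']⟩
  have hr1 : (‖r‖₊ : ℝ≥0∞) ≠ ∞ := ENNReal.coe_ne_top
  have hpt : ∀ h ∈ B, (‖r • u‖₊ : ℝ≥0∞) ^ β * (‖r • u + r • h‖₊ : ℝ≥0∞) ^ (-β) ≤
      2 ^ β * (1 + (‖u + h‖₊ : ℝ≥0∞) ^ (-β)) := by
    intro h hh
    have hle : (‖u‖₊ : ℝ≥0∞) ≤ ‖u + h‖₊ + 1 := by
      have : ‖u‖ ≤ ‖u + h‖ + 1 := by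
        have h1 := norm_sub_le (u + h) h
        rw [add_sub_cancel_right] at h1
        have h2 : ‖h‖ ≤ 1 := hh
        linarith
      exact_mod_cast this
    rw [← smul_add, nnnorm_smul, nnnorm_smul, ENNReal.coe_mul, ENNReal.coe_mul,
      ENNReal.mul_rpow_of_ne_top hr1 ENNReal.coe_ne_top,
      ENNReal.mul_rpow_of_ne_top hr1 ENNReal.coe_ne_top]
    calc _ = ((‖r‖₊ : ℝ≥0∞) ^ β * (‖r‖₊ : ℝ≥0∞) ^ (-β)) *
          ((‖u‖₊ : ℝ≥0∞) ^ β * (‖u + h‖₊ : ℝ≥0∞) ^ (-β)) := by ring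
      _ ≤ 1 * ((2 ^ β * ((‖u + h‖₊ : ℝ≥0∞) ^ β + 1)) * (‖u + h‖₊ : ℝ≥0∞) ^ (-β)) := by
          gcongr
          · exact rpow_mul_rpow_neg_le_one _ _
          · exact (ENNReal.rpow_le_rpow hle hβ0).trans (add_one_rpow_le _ hβ0)
      _ = 2 ^ β * ((‖u + h‖₊ : ℝ≥0∞) ^ β * (‖u + h‖₊ : ℝ≥0∞) ^ (-β) +
            (‖u + h‖₊ : ℝ≥0∞) ^ (-β)) := by ring
      _ ≤ _ := by gcongr; exact rpow_mul_rpow_neg_le_one _ _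
  have hout : ∀ y : EuclideanSpace ℝ (Fin n), (‖y‖₊ : ℝ≥0∞) ^ (-β) ≤
      1 + B.indicator (fun y => (‖y‖₊ : ℝ≥0∞) ^ (-β)) y := by
    intro y
    by_cases hy : y ∈ B
    · rw [Set.indicator_of_mem hy]; exact le_add_self
    · have h1 : (1 : ℝ≥0∞) ≤ ‖y‖₊ := by
        have : 1 ≤ ‖y‖ := (not_le.1 hy).le
        exact_mod_cast this
      refine le_trans ?_ le_self_add
      rw [ENNReal.rpow_neg, ENNReal.inv_le_one]
      simpa using ENNReal.rpow_le_rpow h1 hβ0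
  have htr : ∫⁻ h in B, (‖u + h‖₊ : ℝ≥0∞) ^ (-β) ≤ V + I := by
    calc _ ≤ ∫⁻ h in B, (1 + B.indicator (fun y => (‖y‖₊ : ℝ≥0∞) ^ (-β)) (u + h)) :=
          lintegral_mono fun h => hout _
      _ = V + ∫⁻ h in B, B.indicator (fun y => (‖y‖₊ : ℝ≥0∞) ^ (-β)) (u + h) := by
          rw [lintegral_add_left measurable_const]; simp [hV]
      _ ≤ V + ∫⁻ h, B.indicator (fun y => (‖y‖₊ : ℝ≥0∞) ^ (-β)) (u + h) := by
          gcongr; exact Measure.restrict_le_self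
      _ = V + I := by
          rw [lintegral_add_left_eq_self
            (fun h => B.indicator (fun y => (‖y‖₊ : ℝ≥0∞) ^ (-β)) h) u,
            lintegral_indicator hBm]
  calc _ = ∫⁻ h in B, (‖r • u‖₊ : ℝ≥0∞) ^ β * (‖r • u + r • h‖₊ : ℝ≥0∞) ^ (-β) := by
        rw [lintegral_const_mul' _ _ (ENNReal.rpow_lt_top_of_nonneg hβ0 (by simp)).ne]
    _ ≤ ∫⁻ h in B, 2 ^ β * (1 + (‖u + h‖₊ : ℝ≥0∞) ^ (-β)) := setLIntegral_mono' hBm hpt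
    _ = 2 ^ β * (V + ∫⁻ h in B, (‖u + h‖₊ : ℝ≥0∞) ^ (-β)) := by
        rw [lintegral_const_mul' _ _ h2t.ne, lintegral_add_left measurable_const]; simp [hV]
    _ ≤ _ := by gcongr

/-- Averaging over balls of radius `r` is bounded on `L^p(|·|^α)` uniformly in `r`: Hölder's
inequality against the dual weight, the `A_1` bound for the latter, then Tonelli. -/
lemma exists_ballAverage_bound {n : ℕ} (hn : 1 ≤ n) {p α : ℝ} (hp : 1 < p) (hα0 : 0 ≤ α)
    (hα : α < n * (p - 1)) :
    ∃ C : ℝ≥0∞, C < ∞ ∧ ∀ r : ℝ, 0 ≤ r → ∀ g : EuclideanSpace ℝ (Fin n) → ℝ≥0∞, Measurable g →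
      ∫⁻ x, (∫⁻ h in {h : EuclideanSpace ℝ (Fin n) | ‖h‖ ≤ 1}, g (x + r • h)) ^ p *
          (‖x‖₊ : ℝ≥0∞) ^ α ≤
        C * ∫⁻ x, g x ^ p * (‖x‖₊ : ℝ≥0∞) ^ α := by
  have hp1 : 0 < p - 1 := sub_pos.2 hp
  have hp0 : 0 < p := by linarith
  have : Nonempty (Fin n) := ⟨⟨0, hn⟩⟩
  have hβ0 : 0 ≤ α / (p - 1) := by positivity
  obtain ⟨C, hC, hbound⟩ := exists_A1_bound hn hβ0 (by rwa [div_lt_iff₀ hp1])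
  set β := α / (p - 1) with hβ
  set B := {h : EuclideanSpace ℝ (Fin n) | ‖h‖ ≤ 1} with hB
  set V := volume B with hV
  have hVt : V < ∞ := volume_unitBall_lt_top n
  have hCp : C ^ (p - 1) < ∞ := ENNReal.rpow_lt_top_of_nonneg hp1.le hC.ne
  refine ⟨V * C ^ (p - 1), ENNReal.mul_lt_top hVt hCp, fun r hr g hg => ?_⟩
  set q := p / (p - 1) with hq
  have hpq : p.HolderConjugate q := .conjExponent hp
  have hmeas : ∀ x : EuclideanSpace ℝ (Fin n), Measurable fun h => x + r • h := by
    intro x; fun_prop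
  set W : EuclideanSpace ℝ (Fin n) → ℝ≥0∞ := fun y => g y ^ p * (‖y‖₊ : ℝ≥0∞) ^ α with hW
  have hWm : Measurable W := by fun_prop
  have hpt : ∀ x : EuclideanSpace ℝ (Fin n), x ≠ 0 →
      (∫⁻ h in B, g (x + r • h)) ^ p * (‖x‖₊ : ℝ≥0∞) ^ α ≤
        (∫⁻ h in B, W (x + r • h)) * C ^ (p - 1) := by
    intro x hx
    have hne : ∀ᵐ h ∂(volume.restrict B), x + r • h ≠ 0 := by
      refine ae_restrict_of_ae ?_
      filter_upwards [Measure.ae_ne volume (-(r⁻¹ • x))] with h hh h0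
      rcases hr.eq_or_lt with rfl | hr
      · simp [hx] at h0
      · apply hh
        rw [add_eq_zero_iff_eq_neg] at h0
        rw [h0, smul_neg, inv_smul_smul₀ hr.ne', neg_neg]
    have hH : ∫⁻ h in B, g (x + r • h) ≤
        (∫⁻ h in B, W (x + r • h)) ^ (1 / p) *
          (∫⁻ h in B, (‖x + r • h‖₊ : ℝ≥0∞) ^ (-β)) ^ (1 / q) := by
      calc ∫⁻ h in B, g (x + r • h)
          = ∫⁻ h in B, ((fun h => g (x + r • h) * (‖x + r • h‖₊ : ℝ≥0∞) ^ (α / p)) *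
              fun h => (‖x + r • h‖₊ : ℝ≥0∞) ^ (-(α / p))) h := by
            refine lintegral_congr_ae ?_
            filter_upwards [hne] with h hh
            have h0 : (‖x + r • h‖₊ : ℝ≥0∞) ≠ 0 := by simpa using hh
            rw [Pi.mul_apply, mul_assoc, ← ENNReal.rpow_add _ _ h0 ENNReal.coe_ne_top]
            simp
        _ ≤ _ := ENNReal.lintegral_mul_le_Lp_mul_Lq _ hpq
            (by have := hmeas x; fun_prop) (by have := hmeas x; fun_prop)
        _ = _ := by
            congr 3
            · funext h
              rw [ENNReal.mul_rpow_of_nonneg _ _ hp0.le, ← ENNReal.rpow_mul,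
                div_mul_cancel₀ _ hp0.ne']
            · funext h
              rw [← ENNReal.rpow_mul]
              congr 1
              rw [hβ, hq]; field_simp
    have hx' : (‖x‖₊ : ℝ≥0∞) ^ α = ((‖x‖₊ : ℝ≥0∞) ^ β) ^ (p - 1) := by
      rw [← ENNReal.rpow_mul, hβ, div_mul_cancel₀ _ hp1.ne']
    calc _ ≤ ((∫⁻ h in B, W (x + r • h)) ^ (1 / p) *
          (∫⁻ h in B, (‖x + r • h‖₊ : ℝ≥0∞) ^ (-β)) ^ (1 / q)) ^ p *
            (‖x‖₊ : ℝ≥0∞) ^ α := by gcongr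
      _ = (∫⁻ h in B, W (x + r • h)) * ((‖x‖₊ : ℝ≥0∞) ^ β *
          (∫⁻ h in B, (‖x + r • h‖₊ : ℝ≥0∞) ^ (-β))) ^ (p - 1) := by
          rw [hx', ENNReal.mul_rpow_of_nonneg _ _ hp0.le, ENNReal.mul_rpow_of_nonneg _ _ hp1.le,
            ← ENNReal.rpow_mul, ← ENNReal.rpow_mul, one_div_mul_cancel hp0.ne', ENNReal.rpow_one]
          have : 1 / q * p = p - 1 := by rw [hq]; field_simp
          rw [this]; ring
      _ ≤ _ := by gcongr; exact hbound r hr x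
  calc _ ≤ ∫⁻ x, (∫⁻ h in B, W (x + r • h)) * C ^ (p - 1) := by
        refine lintegral_mono_ae ?_
        filter_upwards [Measure.ae_ne volume (0 : EuclideanSpace ℝ (Fin n))] with x hx
        exact hpt x hx
    _ = (∫⁻ x, ∫⁻ h in B, W (x + r • h)) * C ^ (p - 1) := lintegral_mul_const' _ _ hCp.ne
    _ = (∫⁻ h in B, ∫⁻ x, W (x + r • h)) * C ^ (p - 1) := by
        rw [lintegral_lintegral_swap]
        exact (hWm.comp (by fun_prop)).aemeasurable
    _ = (∫⁻ h in B, ∫⁻ x, W x) * C ^ (p - 1) := by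
        congr 2; funext h; exact lintegral_add_right_eq_self W _
    _ = V * C ^ (p - 1) * ∫⁻ x, W x := by
        rw [setLIntegral_const, hV]; ring

/-- The ball means of differences are bounded on `L^p(|·|^α)`, uniformly in `t`. -/
lemma exists_ballMeans_bound {n : ℕ} (hn : 1 ≤ n) {p α : ℝ} (M : ℕ) (hp : 1 < p) (hα0 : 0 ≤ α)
    (hα : α < n * (p - 1)) :
    ∃ C : ℝ≥0∞, C < ∞ ∧ ∀ t : ℝ, 0 ≤ t → ∀ f : EuclideanSpace ℝ (Fin n) → ℝ, Measurable f →
      wLpE n p α (ballMeans n M f t) ≤ C * wLp n p α f := by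
  have hp0 : 0 < p := by linarith
  obtain ⟨C, hC, hbound⟩ := exists_ballAverage_bound hn hp hα0 hα
  set S := Finset.range (M + 1) with hS
  set D : ℝ≥0∞ := (S.card : ℝ≥0∞) ^ (p - 1) * ∑ i ∈ S, (M.choose i : ℝ≥0∞) ^ p * C with hD
  have hDt : D < ∞ := by
    refine ENNReal.mul_lt_top (ENNReal.rpow_lt_top_of_nonneg (by linarith) (by simp)) ?_
    refine ENNReal.sum_lt_top.2 fun i _ => ENNReal.mul_lt_top ?_ hC
    exact ENNReal.rpow_lt_top_of_nonneg hp0.le (by simp)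
  refine ⟨D ^ (1 / p), ENNReal.rpow_lt_top_of_nonneg (by positivity) hDt.ne, fun t ht f hf => ?_⟩
  set B := {h : EuclideanSpace ℝ (Fin n) | ‖h‖ ≤ 1} with hB
  set A : ℕ → EuclideanSpace ℝ (Fin n) → ℝ≥0∞ := fun i x =>
    ∫⁻ h in B, (‖f (x + ((i : ℝ) * t) • h)‖₊ : ℝ≥0∞) with hA
  have hAm : ∀ i, Measurable (A i) := by
    intro i
    refine Measurable.lintegral_prod_right' (ν := volume.restrict B)
      (f := fun z : EuclideanSpace ℝ (Fin n) × EuclideanSpace ℝ (Fin n) =>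
        (‖f (z.1 + ((i : ℝ) * t) • z.2)‖₊ : ℝ≥0∞)) ?_
    have : Measurable fun z : EuclideanSpace ℝ (Fin n) × EuclideanSpace ℝ (Fin n) =>
        f (z.1 + ((i : ℝ) * t) • z.2) := hf.comp (by fun_prop)
    exact this.nnnorm.coe_nnreal_ennreal
  have hpt : ∀ x, ballMeans n M f t x ≤ ∑ i ∈ S, (M.choose i : ℝ≥0∞) * A i x := by
    intro x
    calc ballMeans n M f t x
        ≤ ∫⁻ h in B, ∑ i ∈ S, (M.choose i : ℝ≥0∞) * ‖f (x + ((i : ℝ) * t) • h)‖₊ := by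
          refine lintegral_mono fun h => ?_
          have h1 : ‖iterDiff n M f (t • h) x‖₊ ≤
              ∑ i ∈ S, (M.choose i : NNReal) * ‖f (x + ((i : ℝ) * t) • h)‖₊ := by
            refine (nnnorm_sum_le _ _).trans (Finset.sum_le_sum fun i _ => ?_)
            rw [nnnorm_mul, nnnorm_mul, nnnorm_pow, nnnorm_neg, nnnorm_one, one_pow, one_mul,
              smul_smul]
            simp
          have h2 := ENNReal.coe_le_coe.2 h1
          push_cast at h2
          exact h2
      _ = ∑ i ∈ S, (M.choose i : ℝ≥0∞) * A i x := by
          rw [lintegral_finsetSum]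
          · refine Finset.sum_congr rfl fun i _ => ?_
            rw [lintegral_const_mul' _ _ (by simp)]
          · intro i _
            have : Measurable fun h => f (x + ((i : ℝ) * t) • h) := hf.comp (by fun_prop)
            exact this.nnnorm.coe_nnreal_ennreal.const_mul _
  have hint : ∫⁻ x, ballMeans n M f t x ^ p * (‖x‖₊ : ℝ≥0∞) ^ α ≤
      D * ∫⁻ x, (‖f x‖₊ : ℝ≥0∞) ^ p * (‖x‖₊ : ℝ≥0∞) ^ α := by
    calc _ ≤ ∫⁻ x, (S.card : ℝ≥0∞) ^ (p - 1) * ∑ i ∈ S, (M.choose i : ℝ≥0∞) ^ p *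
            (A i x ^ p * (‖x‖₊ : ℝ≥0∞) ^ α) := by
          refine lintegral_mono fun x => ?_
          calc _ ≤ ((S.card : ℝ≥0∞) ^ (p - 1) *
                ∑ i ∈ S, ((M.choose i : ℝ≥0∞) * A i x) ^ p) * (‖x‖₊ : ℝ≥0∞) ^ α := by
                gcongr
                exact (ENNReal.rpow_le_rpow (hpt x) hp0.le).trans
                  (ENNReal.rpow_sum_le_const_mul_sum_rpow _ _ hp.le)
            _ = _ := by
                rw [mul_assoc, Finset.sum_mul]
                congr 1
                refine Finset.sum_congr rfl fun i _ => ?_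
                rw [ENNReal.mul_rpow_of_nonneg _ _ hp0.le, mul_assoc]
      _ = (S.card : ℝ≥0∞) ^ (p - 1) * ∑ i ∈ S, (M.choose i : ℝ≥0∞) ^ p *
            ∫⁻ x, A i x ^ p * (‖x‖₊ : ℝ≥0∞) ^ α := by
          rw [lintegral_const_mul' _ _
            (ENNReal.rpow_lt_top_of_nonneg (by linarith) (by simp)).ne, lintegral_finsetSum]
          · congr 1
            refine Finset.sum_congr rfl fun i _ => ?_
            rw [lintegral_const_mul' _ _ (ENNReal.rpow_lt_top_of_nonneg hp0.le (by simp)).ne]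
          · intro i _
            have := hAm i
            fun_prop
      _ ≤ (S.card : ℝ≥0∞) ^ (p - 1) * ∑ i ∈ S, (M.choose i : ℝ≥0∞) ^ p *
            (C * ∫⁻ x, (‖f x‖₊ : ℝ≥0∞) ^ p * (‖x‖₊ : ℝ≥0∞) ^ α) := by
          gcongr with i _
          exact hbound (i * t) (by positivity) (fun y => (‖f y‖₊ : ℝ≥0∞))
            hf.nnnorm.coe_nnreal_ennreal
      _ = _ := by
          rw [hD, mul_assoc, Finset.sum_mul]
          simp only [mul_assoc]
  rw [wLp, wLpE, wLpE, ← ENNReal.mul_rpow_of_nonneg _ _ (by positivity)]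
  exact ENNReal.rpow_le_rpow hint (by positivity)

/-! ### Behaviour under dilations -/

lemma lintegral_comp_smul' {E : Type*} [NormedAddCommGroup E] [NormedSpace ℝ E]
    [FiniteDimensional ℝ E] [MeasurableSpace E] [BorelSpace E] (μ : Measure E)
    [μ.IsAddHaarMeasure] {r : ℝ} (hr : 0 < r) (F : E → ℝ≥0∞) :
    ∫⁻ x, F (r • x) ∂μ =
      ENNReal.ofReal (r ^ (-(Module.finrank ℝ E : ℝ))) * ∫⁻ x, F x ∂μ := by
  have h := lintegral_map_equiv (μ := μ) F (Homeomorph.smulOfNeZero r hr.ne').toMeasurableEquiv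
  have h2 : Measure.map (Homeomorph.smulOfNeZero (α := E) r hr.ne').toMeasurableEquiv μ =
      ENNReal.ofReal (abs (r ^ Module.finrank ℝ E)⁻¹) • μ := Measure.map_addHaar_smul μ hr.ne'
  rw [h2, lintegral_smul_measure, abs_of_nonneg (by positivity)] at h
  rw [Real.rpow_neg hr.le, Real.rpow_natCast]
  exact h.symm

lemma wLpE_dilation {n : ℕ} {p α lam : ℝ} (hp : 0 < p) (hlam : 0 < lam)
    (F : EuclideanSpace ℝ (Fin n) → ℝ≥0∞) :
    wLpE n p α (fun x => F (lam • x)) =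
      ENNReal.ofReal (lam ^ (-(((n : ℝ) + α) / p))) * wLpE n p α F := by
  have hpt : ∀ x : EuclideanSpace ℝ (Fin n), F (lam • x) ^ p * (‖x‖₊ : ℝ≥0∞) ^ α =
      ENNReal.ofReal (lam ^ (-α)) * (F (lam • x) ^ p * (‖lam • x‖₊ : ℝ≥0∞) ^ α) := by
    intro x
    have h1 : (‖lam‖₊ : ℝ≥0∞) = ENNReal.ofReal lam := by
      rw [← enorm_eq_nnnorm, Real.enorm_eq_ofReal hlam.le]
    rw [nnnorm_smul, ENNReal.coe_mul, ENNReal.mul_rpow_of_ne_top ENNReal.coe_ne_top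
      ENNReal.coe_ne_top, h1, ENNReal.ofReal_rpow_of_pos hlam]
    have h2 : ENNReal.ofReal (lam ^ (-α)) * ENNReal.ofReal (lam ^ α) = 1 := by
      rw [← ENNReal.ofReal_mul (by positivity), ← Real.rpow_add hlam]; simp
    calc _ = 1 * (F (lam • x) ^ p * (‖x‖₊ : ℝ≥0∞) ^ α) := by rw [one_mul]
      _ = _ := by rw [← h2]; ring
  rw [wLpE, wLpE, lintegral_congr hpt, lintegral_const_mul' _ _ ENNReal.ofReal_ne_top,
    lintegral_comp_smul' volume hlam (fun y => F y ^ p * (‖y‖₊ : ℝ≥0∞) ^ α), ← mul_assoc,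
    ← ENNReal.ofReal_mul (by positivity), ← Real.rpow_add hlam,
    ENNReal.mul_rpow_of_nonneg _ _ (by positivity), ENNReal.ofReal_rpow_of_pos (by positivity),
    ← Real.rpow_mul hlam.le, finrank_euclideanSpace_fin]
  congr 3
  ring

lemma ballMeans_dilation {n M : ℕ} (f : EuclideanSpace ℝ (Fin n) → ℝ) (lam t : ℝ) :
    ballMeans n M (fun x => f (lam • x)) t = fun x => ballMeans n M f (lam * t) (lam • x) := by
  funext x
  simp only [ballMeans, iterDiff, smul_add, smul_smul]
  congr! 9
  ring

/-! ### The Besov seminorm -/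

/-- The rescaled Besov integral: after the substitution `u = λ t` the range `u < 1` gives back the
original integral, and on `u ≥ 1` the uniform bound `G u ≤ N` and the decay of `u^(-sq)` suffice. -/
lemma besov_integral_bound {s Q lam : ℝ} (hs : 0 < s) (hQ : 0 < Q) (hlam : 0 < lam)
    (G : ℝ → ℝ≥0∞) (N : ℝ≥0∞) (hG : ∀ u, 0 ≤ u → G u ≤ N) :
    ∫⁻ t in Set.Ioo (0 : ℝ) 1,
        ENNReal.ofReal (t ^ (-(s * Q))) * G (lam * t) ^ Q * ENNReal.ofReal t⁻¹ ≤
      ENNReal.ofReal (lam ^ (s * Q)) *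
        ((∫⁻ u in Set.Ioo (0 : ℝ) 1,
          ENNReal.ofReal (u ^ (-(s * Q))) * G u ^ Q * ENNReal.ofReal u⁻¹) +
          ENNReal.ofReal (1 / (s * Q)) * N ^ Q) := by
  have hsQ : 0 < s * Q := by positivity
  set H : ℝ → ℝ≥0∞ := fun u => ENNReal.ofReal (u ^ (-(s * Q))) * G u ^ Q * ENNReal.ofReal u⁻¹
    with hH
  have hpt : ∀ t : ℝ, (Set.Ioo (0 : ℝ) 1).indicator
      (fun t => ENNReal.ofReal (t ^ (-(s * Q))) * G (lam * t) ^ Q * ENNReal.ofReal t⁻¹) t =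
      ENNReal.ofReal (lam ^ (s * Q + 1)) * (Set.Ioo (0 : ℝ) lam).indicator H (lam • t) := by
    intro t
    by_cases ht : t ∈ Set.Ioo (0 : ℝ) 1
    · have ht' : lam • t ∈ Set.Ioo (0 : ℝ) lam := by
        refine ⟨mul_pos hlam ht.1, ?_⟩
        simpa using mul_lt_mul_of_pos_left ht.2 hlam
      rw [Set.indicator_of_mem ht, Set.indicator_of_mem ht', hH, smul_eq_mul]
      dsimp only
      have h0 : 0 < t := ht.1
      have e1 : t ^ (-(s * Q)) * t⁻¹ =
          lam ^ (s * Q + 1) * ((lam * t) ^ (-(s * Q)) * (lam * t)⁻¹) := by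
        rw [Real.mul_rpow hlam.le h0.le, Real.rpow_add hlam, Real.rpow_neg hlam.le,
          Real.rpow_one]
        field_simp
      calc _ = ENNReal.ofReal (t ^ (-(s * Q)) * t⁻¹) * G (lam * t) ^ Q := by
            rw [ENNReal.ofReal_mul (by positivity)]; ring
        _ = _ := by
            rw [e1, ENNReal.ofReal_mul (by positivity), ENNReal.ofReal_mul (by positivity)]; ring
    · have ht' : lam • t ∉ Set.Ioo (0 : ℝ) lam := by
        rintro ⟨h1, h2⟩
        rw [smul_eq_mul] at h1 h2
        exact ht ⟨pos_of_mul_pos_right h1 hlam.le, by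
          by_contra h
          nlinarith [not_lt.1 h]⟩
      rw [Set.indicator_of_notMem ht, Set.indicator_of_notMem ht', mul_zero]
  have htail : ∫⁻ u in Set.Ioi (1 : ℝ), H u ≤ ENNReal.ofReal (1 / (s * Q)) * N ^ Q := by
    have hi : ∫⁻ u in Set.Ioi (1 : ℝ), ENNReal.ofReal (u ^ (-(s * Q) - 1)) =
        ENNReal.ofReal (1 / (s * Q)) := by
      rw [← ofReal_integral_eq_lintegral_ofReal
        (integrableOn_Ioi_rpow_of_lt (by linarith) one_pos), integral_Ioi_rpow_of_lt (by linarith)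
        one_pos]
      · congr 1; simp
      · filter_upwards [ae_restrict_mem measurableSet_Ioi] with u hu
        have : (0 : ℝ) < u := one_pos.trans hu
        positivity
    rw [← hi, ← lintegral_mul_const _ (by fun_prop)]
    refine setLIntegral_mono' measurableSet_Ioi fun u hu => ?_
    have hu0 : (0 : ℝ) < u := one_pos.trans hu
    rw [Real.rpow_sub_one hu0.ne', div_eq_mul_inv, ENNReal.ofReal_mul (by positivity)]
    calc H u = ENNReal.ofReal (u ^ (-(s * Q))) * ENNReal.ofReal u⁻¹ * G u ^ Q := by
          rw [hH]; ring
      _ ≤ _ := by gcongr; exact hG u hu0.le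
  have hsub : Set.Ioo (0 : ℝ) lam ⊆ (Set.Ioo (0 : ℝ) 1 ∪ {1}) ∪ Set.Ioi 1 := by
    intro u hu
    rcases lt_trichotomy u 1 with h | h | h
    · exact .inl (.inl ⟨hu.1, h⟩)
    · exact .inl (.inr h)
    · exact .inr h
  calc _ = ∫⁻ t, ENNReal.ofReal (lam ^ (s * Q + 1)) *
          (Set.Ioo (0 : ℝ) lam).indicator H (lam • t) := by
        rw [← lintegral_indicator measurableSet_Ioo]; exact lintegral_congr hpt
    _ = ENNReal.ofReal (lam ^ (s * Q)) * ∫⁻ u in Set.Ioo (0 : ℝ) lam, H u := by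
        rw [lintegral_const_mul' _ _ ENNReal.ofReal_ne_top,
          lintegral_comp_smul' volume hlam ((Set.Ioo (0 : ℝ) lam).indicator H),
          lintegral_indicator measurableSet_Ioo, ← mul_assoc,
          ← ENNReal.ofReal_mul (by positivity), ← Real.rpow_add hlam]
        simp
    _ ≤ _ := by
        gcongr
        calc _ ≤ ∫⁻ u in (Set.Ioo (0 : ℝ) 1 ∪ {1}) ∪ Set.Ioi 1, H u := lintegral_mono_set hsub
          _ ≤ (∫⁻ u in Set.Ioo (0 : ℝ) 1, H u) + (∫⁻ u in {(1 : ℝ)}, H u) +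
              ∫⁻ u in Set.Ioi (1 : ℝ), H u :=
            (lintegral_union_le _ _ _).trans (by gcongr; exact lintegral_union_le _ _ _)
          _ = (∫⁻ u in Set.Ioo (0 : ℝ) 1, H u) + ∫⁻ u in Set.Ioi (1 : ℝ), H u := by
            rw [setLIntegral_measure_zero {(1 : ℝ)} _ (by simp), add_zero]
          _ ≤ _ := by gcongr

/-- The part of the Besov norm that involves the ball means of differences. -/
def besovSeminorm (n : ℕ) (p α s : ℝ) (q : ℝ≥0∞) (M : ℕ)
    (f : EuclideanSpace ℝ (Fin n) → ℝ) : ℝ≥0∞ :=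
  if q = ∞ then
    ⨆ t ∈ Set.Ioo (0 : ℝ) 1, ENNReal.ofReal (t ^ (-s)) * wLpE n p α (ballMeans n M f t)
  else
    (∫⁻ t in Set.Ioo (0 : ℝ) 1,
        ENNReal.ofReal (t ^ (-(s * q.toReal))) * wLpE n p α (ballMeans n M f t) ^ q.toReal *
          ENNReal.ofReal t⁻¹) ^ (1 / q.toReal)

lemma besovNorm_eq (n : ℕ) (p α s : ℝ) (q : ℝ≥0∞) (M : ℕ)
    (f : EuclideanSpace ℝ (Fin n) → ℝ) :
    besovNorm n p α s q M f = wLp n p α f + besovSeminorm n p α s q M f := rfl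

/-- The seminorm of the dilated function, for finite and infinite `q`; the term with `wLp` accounts
for the scales `λ t ≥ 1`. -/
lemma exists_besovSeminorm_bound {n : ℕ} (hn : 1 ≤ n) {p α s : ℝ} (q : ℝ≥0∞) (M : ℕ)
    (hp : 1 < p) (hq : 1 ≤ q) (hα0 : 0 ≤ α) (hα : α < n * (p - 1)) (hs0 : 0 < s) :
    ∃ c : ℝ≥0∞, c < ∞ ∧ ∀ lam : ℝ, 1 ≤ lam → ∀ f : EuclideanSpace ℝ (Fin n) → ℝ, Measurable f →
      besovSeminorm n p α s q M (fun x => f (lam • x)) ≤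
        ENNReal.ofReal (lam ^ (s - ((n : ℝ) + α) / p)) *
          (besovSeminorm n p α s q M f + c * wLp n p α f) := by
  have hp0 : 0 < p := by linarith
  obtain ⟨C, hC, hbound⟩ := exists_ballMeans_bound hn M hp hα0 hα
  have hdil : ∀ lam : ℝ, 0 < lam → ∀ (f : EuclideanSpace ℝ (Fin n) → ℝ) (t : ℝ),
      wLpE n p α (ballMeans n M (fun x => f (lam • x)) t) =
        ENNReal.ofReal (lam ^ (-(((n : ℝ) + α) / p))) * wLpE n p α (ballMeans n M f (lam * t)) := by
    intro lam hlam f t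
    rw [ballMeans_dilation]
    exact wLpE_dilation hp0 hlam _
  by_cases hqt : q = ∞
  · refine ⟨C, hC, fun lam hlam f hf => ?_⟩
    have hlam0 : 0 < lam := one_pos.trans_le hlam
    simp only [besovSeminorm, if_pos hqt]
    refine iSup₂_le fun t ht => ?_
    have ht0 : 0 < t := ht.1
    have hu0 : 0 < lam * t := mul_pos hlam0 ht0
    have e1 : t ^ (-s) * lam ^ (-(((n : ℝ) + α) / p)) =
        lam ^ (s - ((n : ℝ) + α) / p) * (lam * t) ^ (-s) := by
      rw [Real.mul_rpow hlam0.le ht0.le, sub_eq_add_neg, Real.rpow_add hlam0,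
        Real.rpow_neg hlam0.le s]
      field_simp
    rw [hdil lam hlam0, ← mul_assoc, ← ENNReal.ofReal_mul (by positivity), e1,
      ENNReal.ofReal_mul (by positivity), mul_assoc]
    gcongr
    rcases lt_or_ge (lam * t) 1 with hu | hu
    · exact (le_iSup₂ (f := fun (t : ℝ) (_ : t ∈ Set.Ioo (0 : ℝ) 1) =>
        ENNReal.ofReal (t ^ (-s)) * wLpE n p α (ballMeans n M f t)) (lam * t)
        ⟨hu0, hu⟩).trans le_self_add
    · refine le_trans ?_ le_add_self
      calc _ ≤ 1 * (C * wLp n p α f) := by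
            gcongr
            · rw [ENNReal.ofReal_le_one]
              exact Real.rpow_le_one_of_one_le_of_nonpos hu (by linarith)
            · exact hbound _ hu0.le f hf
        _ = _ := one_mul _
  · set Q := q.toReal with hQ
    have hQ1 : 1 ≤ Q := by
      rw [hQ, ← ENNReal.toReal_one]
      exact ENNReal.toReal_mono hqt hq
    have hQ0 : 0 < Q := by linarith
    have hQi : 0 ≤ 1 / Q := by positivity
    refine ⟨ENNReal.ofReal (1 / (s * Q)) ^ (1 / Q) * C, ENNReal.mul_lt_top
      (ENNReal.rpow_lt_top_of_nonneg hQi ENNReal.ofReal_ne_top) hC, fun lam hlam f hf => ?_⟩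
    have hlam0 : 0 < lam := one_pos.trans_le hlam
    simp only [besovSeminorm, if_neg hqt, ← hQ]
    set κ := ((n : ℝ) + α) / p
    set N := wLp n p α f
    set G : ℝ → ℝ≥0∞ := fun t => wLpE n p α (ballMeans n M f t) with hG
    set J := ∫⁻ t in Set.Ioo (0 : ℝ) 1,
      ENNReal.ofReal (t ^ (-(s * Q))) * G t ^ Q * ENNReal.ofReal t⁻¹ with hJ
    have hcancel : ∀ a : ℝ≥0∞, (a ^ Q) ^ (1 / Q) = a := by
      intro a
      rw [← ENNReal.rpow_mul, mul_one_div_cancel hQ0.ne', ENNReal.rpow_one]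
    have hint := besov_integral_bound hs0 hQ0 hlam0 G (C * N) fun u hu => hbound u hu f hf
    rw [← hJ] at hint
    calc _ = (∫⁻ t in Set.Ioo (0 : ℝ) 1, ENNReal.ofReal (lam ^ (-κ)) ^ Q *
          (ENNReal.ofReal (t ^ (-(s * Q))) * G (lam * t) ^ Q * ENNReal.ofReal t⁻¹)) ^ (1 / Q) := by
          congr 2
          funext t
          rw [hdil lam hlam0, ENNReal.mul_rpow_of_nonneg _ _ hQ0.le]
          ring
      _ ≤ (ENNReal.ofReal (lam ^ (-κ)) ^ Q * (ENNReal.ofReal (lam ^ (s * Q)) *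
            (J + ENNReal.ofReal (1 / (s * Q)) * (C * N) ^ Q))) ^ (1 / Q) := by
          rw [lintegral_const_mul' _ _
            (ENNReal.rpow_lt_top_of_nonneg hQ0.le ENNReal.ofReal_ne_top).ne]
          gcongr
      _ = ENNReal.ofReal (lam ^ (s - κ)) *
            (J + ENNReal.ofReal (1 / (s * Q)) * (C * N) ^ Q) ^ (1 / Q) := by
          rw [ENNReal.mul_rpow_of_nonneg _ _ hQi, ENNReal.mul_rpow_of_nonneg _ _ hQi, hcancel,
            Real.rpow_mul hlam0.le, ← ENNReal.ofReal_rpow_of_nonneg (by positivity) hQ0.le,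
            hcancel, ← mul_assoc, ← ENNReal.ofReal_mul (by positivity), ← Real.rpow_add hlam0,
            neg_add_eq_sub]
      _ ≤ ENNReal.ofReal (lam ^ (s - κ)) *
            (J ^ (1 / Q) + (ENNReal.ofReal (1 / (s * Q)) * (C * N) ^ Q) ^ (1 / Q)) := by
          gcongr
          exact ENNReal.rpow_add_le_add_rpow _ _ hQi (by rw [div_le_one hQ0]; exact hQ1)
      _ = _ := by
          rw [ENNReal.mul_rpow_of_nonneg _ _ hQi, hcancel, mul_assoc]

/-- Dilation estimate in weighted Besov spaces: `‖f(λ·)‖* ≤ c λ^(s-(n+α)/p) ‖f‖*` for `λ ≥ 1`. -/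
theorem besov_dilation
    (n : ℕ) (hn : 1 ≤ n) (p α s : ℝ) (q : ℝ≥0∞) (M : ℕ)
    (hp : 1 < p) (hq : 1 ≤ q) (hα0 : 0 ≤ α) (hα : α < n * (p - 1))
    (hs0 : 0 < s) (hsM : s < (M : ℝ)) :
    ∃ c : ℝ, 0 < c ∧ ∀ lam : ℝ, 1 ≤ lam → ∀ f : EuclideanSpace ℝ (Fin n) → ℝ,
      MemBesov n p α s q M f →
        MemBesov n p α s q M (fun x => f (lam • x)) ∧
        besovNorm n p α s q M (fun x => f (lam • x)) ≤
          ENNReal.ofReal (c * lam ^ (s - ((n : ℝ) + α) / p)) * besovNorm n p α s q M f := by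
  have hp0 : 0 < p := by linarith
  obtain ⟨c, hc, hsemi⟩ := exists_besovSeminorm_bound hn q M hp hq hα0 hα hs0
  refine ⟨(1 + c).toReal, ENNReal.toReal_pos (by simp) (by simp [hc.ne]), fun lam hlam f hf => ?_⟩
  have hlam0 : 0 < lam := one_pos.trans_le hlam
  have key : besovNorm n p α s q M (fun x => f (lam • x)) ≤
      ENNReal.ofReal ((1 + c).toReal * lam ^ (s - ((n : ℝ) + α) / p)) *
        besovNorm n p α s q M f := by
    rw [ENNReal.ofReal_mul ENNReal.toReal_nonneg, ENNReal.ofReal_toReal (by simp [hc.ne])]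
    have hN : wLp n p α (fun x => f (lam • x)) ≤
        ENNReal.ofReal (lam ^ (s - ((n : ℝ) + α) / p)) * wLp n p α f := by
      rw [wLp, wLp, wLpE_dilation hp0 hlam0 (fun y => (‖f y‖₊ : ℝ≥0∞))]
      gcongr
      linarith
    have hS := hsemi lam hlam f hf.1
    rw [besovNorm_eq, besovNorm_eq]
    set K := ENNReal.ofReal (lam ^ (s - ((n : ℝ) + α) / p))
    set S := besovSeminorm n p α s q M f
    set N := wLp n p α f
    calc _ ≤ K * N + K * (S + c * N) := add_le_add hN hS
      _ = K * ((1 + c) * N + S) := by ring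
      _ ≤ K * ((1 + c) * N + (1 + c) * S) := by
          gcongr
          calc S = 1 * S := (one_mul _).symm
            _ ≤ (1 + c) * S := by gcongr; exact le_self_add
      _ = _ := by ring
  exact ⟨⟨hf.1.comp (measurable_const_smul lam), key.trans_lt
    (ENNReal.mul_lt_top ENNReal.ofReal_lt_top hf.2)⟩, key⟩
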